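/- Let n ≥ 1 and p ∈ (0,∞). Identify M_{2n}(ℂ) with 2×2 block matrices over Mₙ(ℂ) (via fromBlocks), and let 𝒫_{1/2} denote the set of projections in M_{2n}(ℂ) of normalized trace 1/2. Let φ : 𝒫_{1/2} → 𝒫_{1/2} be a surjective L^p-isometry (with respect to the normalized-trace L^p-norm on M_{2n}(ℂ)) satisfying φ(fromBlocks(I, 0, 0, 0)) = fromBlocks(I, 0, 0, 0). Then there exists a surjective L^p-isometry ψ : 𝒰(Mₙ(ℂ)) → 𝒰(Mₙ(ℂ)) (with respect to the normalized-trace L^p-norm on Mₙ(ℂ)) such that φ((1/2)·fromBlocks(I, V, Vᴴ, I)) = (1/2)·fromBlocks(I, ψ(V), ψ(V)ᴴ, I) for every unitary V ∈ Mₙ(ℂ). -/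

import Mathlib

open Matrix
open scoped ComplexOrder

/-- The normalized trace `L^p`-(quasi-)norm `(τ(|A|^p))^{1/p}` of a complex matrix,
computed via the eigenvalues of `Aᴴ * A`: the eigenvalues of `|A|^p` are the
`(p/2)`-th powers of those of `Aᴴ * A`, and the trace of a Hermitian matrix is the
sum of its eigenvalues. -/
noncomputable def lpnorm {m : Type*} [Fintype m] [DecidableEq m] (p : ℝ)
    (A : Matrix m m ℂ) : ℝ :=
  ((∑ i, ((Matrix.posSemidef_conjTranspose_mul_self A).isHermitian.eigenvalues i) ^ (p / 2)) /
      (Fintype.card m : ℝ)) ^ (1 / p)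

/-- The `ℓ² → ℓ²` operator norm of a complex matrix. -/
noncomputable def l2opNorm {m : Type*} [Fintype m] [DecidableEq m]
    (A : Matrix m m ℂ) : ℝ :=
  ‖Matrix.toEuclideanCLM (𝕜 := ℂ) A‖

/-- The sum of `f` over the real parts of the roots of the characteristic polynomial. -/
noncomputable def specSum {m : Type*} [Fintype m] [DecidableEq m] (f : ℝ → ℝ)
    (A : Matrix m m ℂ) : ℝ :=
  (A.charpoly.roots.map fun z => f z.re).sum

section Spectral

variable {m : Type*} [Fintype m] [DecidableEq m]

theorem specSum_eq_sum_eigenvalues (f : ℝ → ℝ) {A : Matrix m m ℂ} (hA : A.IsHermitian) :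
    specSum f A = ∑ i, f (hA.eigenvalues i) := by
  simp [specSum, hA.roots_charpoly_eq_eigenvalues]

theorem specSum_affine (f : ℝ → ℝ) {A : Matrix m m ℂ} (hA : A.IsHermitian) (a b : ℝ) :
    specSum f ((a : ℂ) • (1 : Matrix m m ℂ) + (b : ℂ) • A) =
      ∑ i, f (a + b * hA.eigenvalues i) := by
  have hdiag : (a : ℂ) • (1 : Matrix m m ℂ) + (b : ℂ) • A =
      Unitary.conjStarAlgAut ℂ _ hA.eigenvectorUnitary
        (diagonal fun i => ((a + b * hA.eigenvalues i : ℝ) : ℂ)) := by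
    have hsplit : (diagonal fun i => ((a + b * hA.eigenvalues i : ℝ) : ℂ)) =
        (a : ℂ) • (1 : Matrix m m ℂ) +
          (b : ℂ) • diagonal (RCLike.ofReal ∘ hA.eigenvalues : m → ℂ) := by
      ext i j
      by_cases hij : i = j
      · subst hij
        simp
      · simp [hij]
    rw [hsplit, map_add, map_smul, map_smul, map_one, ← hA.spectral_theorem]
  have hchar : ((a : ℂ) • (1 : Matrix m m ℂ) + (b : ℂ) • A).charpoly =
      (diagonal fun i => ((a + b * hA.eigenvalues i : ℝ) : ℂ)).charpoly := by
    rw [hdiag, Unitary.conjStarAlgAut_apply, charpoly_mul_comm, ← mul_assoc]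
    simp
  rw [specSum, hchar, charpoly_diagonal, Polynomial.roots_prod]
  · simp_rw [Polynomial.roots_X_sub_C]
    simp
  · exact Finset.prod_ne_zero_iff.2 fun i _ => Polynomial.X_sub_C_ne_zero _

theorem specSum_fromBlocks_diagonal {k : Type*} [Fintype k] [DecidableEq k] (f : ℝ → ℝ)
    (A : Matrix m m ℂ) (B : Matrix k k ℂ) :
    specSum f (fromBlocks A 0 0 B) = specSum f A + specSum f B := by
  rw [specSum, charpoly_fromBlocks_zero₁₂, Polynomial.roots_mul]
  · simp [specSum]
  · exact mul_ne_zero (charpoly_monic A).ne_zero (charpoly_monic B).ne_zero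

theorem specSum_mul_comm (f : ℝ → ℝ) (A B : Matrix m m ℂ) :
    specSum f (A * B) = specSum f (B * A) := by
  rw [specSum, charpoly_mul_comm, specSum]

theorem specSum_smul_one (f : ℝ → ℝ) (c : ℝ) :
    specSum f ((c : ℂ) • (1 : Matrix m m ℂ)) = Fintype.card m * f c := by
  have h := specSum_affine f (isHermitian_one (n := m) (α := ℂ)) c 0
  simpa using h

theorem eq_smul_one_of_eigenvalues_eq {A : Matrix m m ℂ} (hA : A.IsHermitian) {c : ℝ}
    (h : ∀ i, hA.eigenvalues i = c) : A = (c : ℂ) • (1 : Matrix m m ℂ) := by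
  have hd : diagonal (RCLike.ofReal ∘ hA.eigenvalues : m → ℂ) = (c : ℂ) • 1 := by
    ext i j
    by_cases hij : i = j
    · subst hij
      simp [h]
    · simp [hij]
  rw [hA.spectral_theorem, hd, map_smul, map_one]

theorem specSum_conjTranspose_mul_self_nonneg (p : ℝ) (A : Matrix m m ℂ) :
    0 ≤ specSum (fun x => x ^ (p / 2)) (Aᴴ * A) := by
  rw [specSum_eq_sum_eigenvalues _ (posSemidef_conjTranspose_mul_self A).isHermitian]
  exact Finset.sum_nonneg fun i _ =>
    Real.rpow_nonneg ((posSemidef_conjTranspose_mul_self A).eigenvalues_nonneg i) _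

theorem lpnorm_eq_specSum (p : ℝ) (A : Matrix m m ℂ) :
    lpnorm p A = (specSum (fun x => x ^ (p / 2)) (Aᴴ * A) / Fintype.card m) ^ (1 / p) := by
  rw [lpnorm, specSum_eq_sum_eigenvalues _ (posSemidef_conjTranspose_mul_self A).isHermitian]

theorem lpnorm_eq_lpnorm_iff [Nonempty m] {p : ℝ} (hp : 0 < p) (A B : Matrix m m ℂ) :
    lpnorm p A = lpnorm p B ↔
      specSum (fun x => x ^ (p / 2)) (Aᴴ * A) = specSum (fun x => x ^ (p / 2)) (Bᴴ * B) := by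
  have hc : (0 : ℝ) < Fintype.card m := by exact_mod_cast Fintype.card_pos
  rw [lpnorm_eq_specSum, lpnorm_eq_specSum, Real.rpow_left_inj
    (div_nonneg (specSum_conjTranspose_mul_self_nonneg p A) hc.le)
    (div_nonneg (specSum_conjTranspose_mul_self_nonneg p B) hc.le) (one_div_pos.2 hp).ne',
    div_left_inj' hc.ne']

theorem specSum_two (A : Matrix m m ℂ) :
    ((specSum (fun x => x ^ ((2 : ℝ) / 2)) (Aᴴ * A) : ℝ) : ℂ) = (Aᴴ * A).trace := by
  rw [specSum_eq_sum_eigenvalues _ (posSemidef_conjTranspose_mul_self A).isHermitian,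
    (posSemidef_conjTranspose_mul_self A).isHermitian.trace_eq_sum_eigenvalues]
  simp

end Spectral

section Inequality

theorem half_rpow_strict_convex {q x : ℝ} (hq : 1 < q) (h0 : 0 ≤ x) (h1 : x ≤ 1)
    (hx : x ≠ 1 / 2) : 2 * (1 / 2 : ℝ) ^ q < x ^ q + (1 - x) ^ q := by
  have h := (strictConvexOn_rpow hq).2 (Set.mem_Ici.2 h0) (Set.mem_Ici.2 (sub_nonneg.2 h1))
    (fun h => hx (by linarith)) (half_pos one_pos) (half_pos one_pos) (add_halves 1)
  simp only [smul_eq_mul] at h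
  rw [show (1 / 2 : ℝ) * x + 1 / 2 * (1 - x) = 1 / 2 by ring] at h
  linarith

theorem half_rpow_strict_concave {q x : ℝ} (hq0 : 0 < q) (hq : q < 1) (h0 : 0 ≤ x) (h1 : x ≤ 1)
    (hx : x ≠ 1 / 2) : x ^ q + (1 - x) ^ q < 2 * (1 / 2 : ℝ) ^ q := by
  have h := (Real.strictConcaveOn_rpow hq0 hq).2 (Set.mem_Ici.2 h0)
    (Set.mem_Ici.2 (sub_nonneg.2 h1))
    (fun h => hx (by linarith)) (half_pos one_pos) (half_pos one_pos) (add_halves 1)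
  simp only [smul_eq_mul] at h
  rw [show (1 / 2 : ℝ) * x + 1 / 2 * (1 - x) = 1 / 2 by ring] at h
  linarith

theorem eq_half_of_sum_rpow {ι : Type*} [Fintype ι] {q : ℝ} (hq0 : 0 < q) (hq : q ≠ 1)
    {x : ι → ℝ} (h0 : ∀ i, 0 ≤ x i) (h1 : ∀ i, x i ≤ 1)
    (hsum : ∑ i, (x i ^ q + (1 - x i) ^ q) = ∑ _i : ι, 2 * (1 / 2 : ℝ) ^ q) (i : ι) :
    x i = 1 / 2 := by
  by_contra hi
  have hhalf : (1 / 2 : ℝ) ^ q + (1 - 1 / 2) ^ q = 2 * (1 / 2 : ℝ) ^ q := by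
    rw [show (1 : ℝ) - 1 / 2 = 1 / 2 by norm_num]
    ring
  rcases lt_or_gt_of_ne hq with hq | hq
  · refine (Finset.sum_lt_sum (fun j _ => ?_)
      ⟨i, Finset.mem_univ i, half_rpow_strict_concave hq0 hq (h0 i) (h1 i) hi⟩).ne hsum
    by_cases hj : x j = 1 / 2
    · rw [hj, hhalf]
    · exact (half_rpow_strict_concave hq0 hq (h0 j) (h1 j) hj).le
  · refine (Finset.sum_lt_sum (fun j _ => ?_)
      ⟨i, Finset.mem_univ i, half_rpow_strict_convex hq (h0 i) (h1 i) hi⟩).ne' hsum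
    by_cases hj : x j = 1 / 2
    · rw [hj, hhalf]
    · exact (half_rpow_strict_convex hq (h0 j) (h1 j) hj).le

end Inequality

section Projections

theorem conjTranspose_sub_of_eq {m : Type*} {P E : Matrix m m ℂ} (hP : Pᴴ = P) (hE : Eᴴ = E) :
    (P - E)ᴴ = P - E := by
  rw [conjTranspose_sub, hP, hE]

theorem isHermitian_sq_sub {m : Type*} [Fintype m] {P E : Matrix m m ℂ} (hPh : Pᴴ = P)
    (hEh : Eᴴ = E) : ((P - E) * (P - E)).IsHermitian := by
  rw [IsHermitian, conjTranspose_mul, conjTranspose_sub_of_eq hPh hEh]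

theorem conjTranspose_one_sub_of_eq {m : Type*} [DecidableEq m] {E : Matrix m m ℂ} (hE : Eᴴ = E) :
    (1 - E)ᴴ = 1 - E := by
  rw [conjTranspose_sub, hE, conjTranspose_one]

variable {m : Type*} [Fintype m] [DecidableEq m]

theorem sq_add_sub_one {P E : Matrix m m ℂ} (hP : P * P = P) (hE : E * E = E) :
    (P + E - 1) * (P + E - 1) = 1 - (P - E) * (P - E) := by
  simp only [mul_sub, sub_mul, mul_add, add_mul, hP, hE, mul_one, one_mul]
  abel

theorem sq_sub_one_sub {P E : Matrix m m ℂ} (hP : P * P = P) (hE : E * E = E) :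
    (P - (1 - E)) * (P - (1 - E)) = 1 - (P - E) * (P - E) := by
  rw [← sq_add_sub_one hP hE, show P - (1 - E) = P + E - 1 by abel]

/-- The squared difference of two projections is a contraction. -/
theorem eigenvalues_sq_sub_le_one {P E : Matrix m m ℂ} (hPh : Pᴴ = P) (hP : P * P = P)
    (hEh : Eᴴ = E) (hE : E * E = E) (hH : ((P - E) * (P - E)).IsHermitian) (i : m) :
    hH.eigenvalues i ≤ 1 := by
  have hpsd : (1 - (P - E) * (P - E)).PosSemidef := by
    rw [← sq_sub_one_sub hP hE]
    nth_rewrite 1 [← conjTranspose_sub_of_eq hPh (conjTranspose_one_sub_of_eq hEh)]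
    exact posSemidef_conjTranspose_mul_self _
  set v : m → ℂ := ⇑(hH.eigenvectorBasis i)
  have hv : star v ⬝ᵥ v = 1 := by
    have h := hH.eigenvectorBasis.orthonormal.1 i
    have h' := inner_self_eq_norm_sq_to_K (𝕜 := ℂ) (hH.eigenvectorBasis i)
    rw [h, EuclideanSpace.inner_eq_star_dotProduct, dotProduct_comm] at h'
    simpa using h'
  have h := hpsd.dotProduct_mulVec_nonneg v
  rw [sub_mulVec, one_mulVec, hH.mulVec_eigenvectorBasis, dotProduct_sub, hv] at h
  rw [dotProduct_smul, hv] at h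
  have h' := (Complex.le_def.1 h).1
  simp at h'
  exact h'

theorem eigenvalues_sq_sub_nonneg {P E : Matrix m m ℂ} (hPh : Pᴴ = P)
    (hEh : Eᴴ = E) (hH : ((P - E) * (P - E)).IsHermitian) (i : m) :
    0 ≤ hH.eigenvalues i := by
  refine PosSemidef.eigenvalues_nonneg (A := (P - E) * (P - E)) ?_ i
  nth_rewrite 1 [← conjTranspose_sub_of_eq hPh hEh]
  exact posSemidef_conjTranspose_mul_self _

/-- The complement `1 - E` is the only projection at maximal distance from `E`. -/
theorem eq_one_sub_of_lpnorm_eq [Nonempty m] {p : ℝ} (hp : 0 < p) {P E : Matrix m m ℂ}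
    (hPh : Pᴴ = P) (hP : P * P = P) (hEh : Eᴴ = E) (hE : E * E = E)
    (h : lpnorm p (P - E) = lpnorm p ((1 - E) - E)) : P = 1 - E := by
  have hH := isHermitian_sq_sub hPh hEh
  have hF : ((1 - E) - E) * ((1 - E) - E) = ((1 : ℝ) : ℂ) • 1 := by
    simp only [mul_sub, sub_mul, hE, mul_one, one_mul]
    simp
  rw [lpnorm_eq_lpnorm_iff hp, conjTranspose_sub_of_eq hPh hEh,
    conjTranspose_sub_of_eq (conjTranspose_one_sub_of_eq hEh) hEh, hF, specSum_smul_one,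
    specSum_eq_sum_eigenvalues _ hH] at h
  have hle : ∀ i ∈ Finset.univ, hH.eigenvalues i ^ (p / 2) ≤ 1 := fun i _ =>
    Real.rpow_le_one (eigenvalues_sq_sub_nonneg hPh hEh hH i)
      (eigenvalues_sq_sub_le_one hPh hP hEh hE hH i) (by positivity)
  have hall := (Finset.sum_eq_sum_iff_of_le hle).1 (by simpa using h)
  have hone : (P - E) * (P - E) = ((1 : ℝ) : ℂ) • 1 := by
    refine eq_smul_one_of_eigenvalues_eq hH fun i => ?_
    have h1 := hall i (Finset.mem_univ i)
    rwa [← Real.one_rpow (p / 2), Real.rpow_left_inj (eigenvalues_sq_sub_nonneg hPh hEh hH i)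
      zero_le_one (by positivity)] at h1
  have hzero : (P - (1 - E))ᴴ * (P - (1 - E)) = 0 := by
    rw [conjTranspose_sub_of_eq hPh (conjTranspose_one_sub_of_eq hEh), sq_sub_one_sub hP hE, hone]
    simp
  exact sub_eq_zero.1 (conjTranspose_mul_self_eq_zero.1 hzero)

/-- For `p ≠ 2`, the distances to `E` and `1 - E` detect `(P - E)² = 1/2`. -/
theorem sq_sub_eq_half_of_lpnorm_eq [Nonempty m] {p : ℝ} (hp : 0 < p) (hp2 : p ≠ 2)
    {P Q E : Matrix m m ℂ} (hPh : Pᴴ = P) (hP : P * P = P) (hQh : Qᴴ = Q) (hQ : Q * Q = Q)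
    (hEh : Eᴴ = E) (hE : E * E = E) (hhalf : (P - E) * (P - E) = (2 : ℂ)⁻¹ • 1)
    (h : lpnorm p (Q - E) = lpnorm p (P - E))
    (h' : lpnorm p (Q - (1 - E)) = lpnorm p (P - (1 - E))) :
    (Q - E) * (Q - E) = (2 : ℂ)⁻¹ • 1 := by
  have hH := isHermitian_sq_sub hQh hEh
  have hFh := conjTranspose_one_sub_of_eq hEh
  have hreal : (2 : ℂ)⁻¹ • (1 : Matrix m m ℂ) = ((1 / 2 : ℝ) : ℂ) • 1 := by
    congr 1
    simp
  have hcompl : (1 : Matrix m m ℂ) - (2 : ℂ)⁻¹ • 1 = ((1 / 2 : ℝ) : ℂ) • 1 := by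
    nth_rewrite 1 [← one_smul ℂ (1 : Matrix m m ℂ)]
    rw [← sub_smul]
    congr 1
    push_cast
    norm_num
  have haff : (1 : Matrix m m ℂ) - (Q - E) * (Q - E) =
      ((1 : ℝ) : ℂ) • (1 : Matrix m m ℂ) + ((-1 : ℝ) : ℂ) • ((Q - E) * (Q - E)) := by
    simp [sub_eq_add_neg]
  rw [lpnorm_eq_lpnorm_iff hp, conjTranspose_sub_of_eq hQh hEh, conjTranspose_sub_of_eq hPh hEh,
    hhalf, hreal, specSum_smul_one, specSum_eq_sum_eigenvalues _ hH] at h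
  rw [lpnorm_eq_lpnorm_iff hp, conjTranspose_sub_of_eq hQh hFh, conjTranspose_sub_of_eq hPh hFh,
    sq_sub_one_sub hP hE, sq_sub_one_sub hQ hE, hhalf, hcompl, specSum_smul_one, haff,
    specSum_affine _ hH] at h'
  rw [hreal]
  refine eq_smul_one_of_eigenvalues_eq hH (eq_half_of_sum_rpow (q := p / 2) (by positivity)
    (fun hq => hp2 (by linarith)) (eigenvalues_sq_sub_nonneg hQh hEh hH)
    (eigenvalues_sq_sub_le_one hQh hQ hEh hE hH) ?_)
  simp only [neg_mul, one_mul, ← sub_eq_add_neg] at h'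
  rw [Finset.sum_add_distrib, h, h', Finset.sum_const, Finset.card_univ, nsmul_eq_mul]
  ring

theorem trace_mul_eq_of_lpnorm_two_eq [Nonempty m] {P E P' E' : Matrix m m ℂ}
    (hPh : Pᴴ = P) (hP : P * P = P) (hEh : Eᴴ = E) (hE : E * E = E)
    (hPh' : P'ᴴ = P') (hP' : P' * P' = P') (hEh' : E'ᴴ = E') (hE' : E' * E' = E')
    (hPt : P'.trace = P.trace) (hEt : E'.trace = E.trace)
    (h : lpnorm 2 (P' - E') = lpnorm 2 (P - E)) : (P' * E').trace = (P * E).trace := by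
  rw [lpnorm_eq_lpnorm_iff two_pos] at h
  have h2 := congrArg (fun x : ℝ => (x : ℂ)) h
  simp only [specSum_two] at h2
  rw [conjTranspose_sub_of_eq hPh hEh, conjTranspose_sub_of_eq hPh' hEh'] at h2
  simp only [mul_sub, sub_mul, trace_sub, hP, hE, hP', hE', trace_mul_comm E P,
    trace_mul_comm E' P', hPt, hEt] at h2
  linear_combination -(1 / 2) * h2

theorem trace_sq_sub_smul {P E T : Matrix m m ℂ} (s : ℂ) (hP : P * P = P) (hE : E * E = E)
    (hT : T * T = T) :
    (((2 : ℂ) • T - 1 - s • ((2 : ℂ) • (P + E - 1))) *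
      ((2 : ℂ) • T - 1 - s • ((2 : ℂ) • (P + E - 1)))).trace =
      (1 + 4 * s ^ 2 - 4 * s) * (1 : Matrix m m ℂ).trace + 8 * s * T.trace +
        (4 * s - 4 * s ^ 2) * (P.trace + E.trace) + 8 * s ^ 2 * (P * E).trace -
        8 * s * ((T * P).trace + (T * E).trace) := by
  simp only [mul_sub, sub_mul, mul_add, add_mul, smul_mul_assoc, mul_smul_comm, smul_sub, smul_add,
    trace_sub, trace_add, trace_smul, hP, hE, hT, mul_one, one_mul, trace_mul_comm E P,
    trace_mul_comm P T, trace_mul_comm E T, smul_eq_mul]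
  ring

/-- If `T` is the normalized midpoint of two anticommuting symmetries, any triple of projections
with the same Hilbert–Schmidt distances has the same shape. -/
theorem sq_sub_eq_half_of_lpnorm_two_eq [Nonempty m] {P E T P' E' T' : Matrix m m ℂ} {s : ℂ}
    (hs : s ^ 2 = 1 / 2) (hsr : star s = s)
    (hPh : Pᴴ = P) (hP : P * P = P) (hEh : Eᴴ = E) (hE : E * E = E) (hTh : Tᴴ = T) (hT : T * T = T)
    (hPh' : P'ᴴ = P') (hP' : P' * P' = P') (hEh' : E'ᴴ = E') (hE' : E' * E' = E')
    (hTh' : T'ᴴ = T') (hT' : T' * T' = T')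
    (hPt : P'.trace = P.trace) (hEt : E'.trace = E.trace) (hTt : T'.trace = T.trace)
    (hPE : lpnorm 2 (P' - E') = lpnorm 2 (P - E)) (hTP : lpnorm 2 (T' - P') = lpnorm 2 (T - P))
    (hTE : lpnorm 2 (T' - E') = lpnorm 2 (T - E))
    (hmid : (2 : ℂ) • T - 1 = s • ((2 : ℂ) • (P + E - 1))) :
    (P' - E') * (P' - E') = (2 : ℂ)⁻¹ • 1 := by
  have hzero : (((2 : ℂ) • T' - 1 - s • ((2 : ℂ) • (P' + E' - 1))) *
      ((2 : ℂ) • T' - 1 - s • ((2 : ℂ) • (P' + E' - 1)))).trace = 0 := by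
    rw [trace_sq_sub_smul s hP' hE' hT', hPt, hEt, hTt,
      trace_mul_eq_of_lpnorm_two_eq hPh hP hEh hE hPh' hP' hEh' hE' hPt hEt hPE,
      trace_mul_eq_of_lpnorm_two_eq hTh hT hPh hP hTh' hT' hPh' hP' hTt hPt hTP,
      trace_mul_eq_of_lpnorm_two_eq hTh hT hEh hE hTh' hT' hEh' hE' hTt hEt hTE,
      ← trace_sq_sub_smul s hP hE hT, hmid, sub_self, zero_mul, trace_zero]
  have hherm : ((2 : ℂ) • T' - 1 - s • ((2 : ℂ) • (P' + E' - 1)))ᴴ =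
      (2 : ℂ) • T' - 1 - s • ((2 : ℂ) • (P' + E' - 1)) := by
    have h2 : star (2 : ℂ) = 2 := star_ofNat 2
    simp only [conjTranspose_sub, conjTranspose_smul, conjTranspose_add, conjTranspose_one, hTh',
      hPh', hEh', hsr, h2]
  nth_rewrite 1 [← hherm] at hzero
  rw [trace_conjTranspose_mul_self_eq_zero_iff, sub_eq_zero] at hzero
  have hsq : ((2 : ℂ) • T' - 1) * ((2 : ℂ) • T' - 1) = 1 := by
    simp only [mul_sub, sub_mul, smul_mul_assoc, mul_smul_comm, hT', mul_one, one_mul]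
    module
  rw [hzero] at hsq
  simp only [smul_mul_assoc, mul_smul_comm] at hsq
  rw [sq_add_sub_one hP' hE', smul_smul, smul_smul, smul_smul,
    show s * 2 * s * 2 = 2 by linear_combination 4 * hs] at hsq
  have hx : (P' - E') * (P' - E') = 1 - (2 : ℂ)⁻¹ • ((2 : ℂ) • (1 - (P' - E') * (P' - E'))) := by
    module
  rw [hx, hsq]
  module

end Projections

section Blocks

theorem fromBlocks_sub_fromBlocks {k : Type*} (A B C D A' B' C' D' : Matrix k k ℂ) :
    fromBlocks A B C D - fromBlocks A' B' C' D' =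
      fromBlocks (A - A') (B - B') (C - C') (D - D') := by
  ext (i | i) (j | j) <;> simp

theorem trace_fromBlocks_eq_add {k : Type*} [Fintype k] (A B C D : Matrix k k ℂ) :
    (fromBlocks A B C D).trace = A.trace + D.trace := by
  simp [trace]

/-- The self-adjoint matrix which, for unitary `V`, is the projection onto the graph of `Vᴴ`. -/
noncomputable abbrev graphProj {k : Type*} [DecidableEq k] (V : Matrix k k ℂ) :
    Matrix (k ⊕ k) (k ⊕ k) ℂ :=
  (2 : ℂ)⁻¹ • fromBlocks 1 V Vᴴ 1

theorem graphProj_conjTranspose {k : Type*} [DecidableEq k] (V : Matrix k k ℂ) :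
    (graphProj V)ᴴ = graphProj V := by
  simp [graphProj, conjTranspose_smul, fromBlocks_conjTranspose]

variable {k : Type*} [Fintype k] [DecidableEq k]

theorem graphProj_mul_self {V : Matrix k k ℂ} (hV : V ∈ unitaryGroup k ℂ) :
    graphProj V * graphProj V = graphProj V := by
  have h1 : V * Vᴴ = 1 := mem_unitaryGroup_iff.1 hV
  have h2 : Vᴴ * V = 1 := mem_unitaryGroup_iff'.1 hV
  simp only [graphProj, smul_mul_assoc, mul_smul_comm, fromBlocks_multiply, h1, h2, mul_one,
    one_mul, fromBlocks_smul]
  congr 1 <;> module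

theorem graphProj_trace (V : Matrix k k ℂ) : (graphProj V).trace = (Fintype.card k : ℂ) := by
  simp [graphProj, trace_smul, trace_fromBlocks_eq_add]
  ring

theorem graphProj_sub_sq {V : Matrix k k ℂ} (hV : V ∈ unitaryGroup k ℂ) :
    (graphProj V - fromBlocks 1 0 0 0) * (graphProj V - fromBlocks 1 0 0 0) =
      (2 : ℂ)⁻¹ • 1 := by
  have h1 : V * Vᴴ = 1 := mem_unitaryGroup_iff.1 hV
  have h2 : Vᴴ * V = 1 := mem_unitaryGroup_iff'.1 hV
  rw [← fromBlocks_one]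
  simp only [graphProj, fromBlocks_smul, fromBlocks_sub_fromBlocks, fromBlocks_multiply, mul_sub,
    sub_mul, smul_mul_assoc, mul_smul_comm, h1, h2, mul_one, one_mul, sub_zero, smul_zero]
  congr 1 <;> module

/-- Projections `P` with `(P - fromBlocks 1 0 0 0)² = 1/2` are graph projections of unitaries. -/
theorem exists_eq_graphProj {P : Matrix (k ⊕ k) (k ⊕ k) ℂ} (hPh : Pᴴ = P) (hP : P * P = P)
    (h : (P - fromBlocks 1 0 0 0) * (P - fromBlocks 1 0 0 0) = (2 : ℂ)⁻¹ • 1) :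
    ∃ V ∈ unitaryGroup k ℂ, P = graphProj V := by
  obtain ⟨A, B, C, D, rfl⟩ : ∃ A B C D, P = fromBlocks A B C D :=
    ⟨_, _, _, _, (fromBlocks_toBlocks P).symm⟩
  rw [fromBlocks_conjTranspose, fromBlocks_inj] at hPh
  obtain ⟨-, hC, -, -⟩ := hPh
  have hCB : C = Bᴴ := by rw [← hC, conjTranspose_conjTranspose]
  have hBC : Bᴴ = C := hCB.symm
  rw [fromBlocks_multiply, fromBlocks_inj] at hP
  rw [← fromBlocks_one, fromBlocks_smul, fromBlocks_sub_fromBlocks, fromBlocks_multiply,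
    fromBlocks_inj] at h
  obtain ⟨h11, -, -, h22⟩ := hP
  obtain ⟨g11, -, -, g22⟩ := h
  simp only [sub_zero] at g11 g22
  have hD : D = (2 : ℂ)⁻¹ • 1 := by rw [← h22, g22]
  have hA : A = (2 : ℂ)⁻¹ • 1 := by
    have hx : (A - 1) * (A - 1) + B * C = 1 - A := by
      simp only [mul_sub, sub_mul, mul_one, one_mul]
      calc A * A - A - (A - 1) + B * C = (A * A + B * C) - A - A + 1 := by abel
        _ = 1 - A := by rw [h11]; abel
    rw [hx] at g11
    calc A = 1 - (1 - A) := by abel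
      _ = (2 : ℂ)⁻¹ • 1 := by rw [g11]; module
  have hBB : B * C = (4 : ℂ)⁻¹ • 1 := by
    rw [hA] at h11
    simp only [smul_mul_assoc, one_mul] at h11
    rw [← eq_sub_iff_add_eq'] at h11
    rw [h11]
    module
  have h2 : star (2 : ℂ) = 2 := star_ofNat 2
  refine ⟨(2 : ℂ) • B, ?_, ?_⟩
  · rw [mem_unitaryGroup_iff, star_eq_conjTranspose, conjTranspose_smul, hBC, h2,
      smul_mul_smul_comm, hBB]
    module
  · rw [graphProj, conjTranspose_smul, hBC, h2, fromBlocks_smul, hA, hD]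
    congr 1 <;> module

theorem specSum_graphProj_sub {p : ℝ} (V W : Matrix k k ℂ) :
    specSum (fun x => x ^ (p / 2)) ((graphProj V - graphProj W)ᴴ * (graphProj V - graphProj W)) =
      2 * (1 / 4 : ℝ) ^ (p / 2) * specSum (fun x => x ^ (p / 2)) ((V - W)ᴴ * (V - W)) := by
  have h2 : star (2 : ℂ)⁻¹ = 2⁻¹ := by simp
  have hsub : graphProj V - graphProj W =
      fromBlocks 0 ((2 : ℂ)⁻¹ • (V - W)) ((2 : ℂ)⁻¹ • (V - W))ᴴ 0 := by
    simp only [graphProj, conjTranspose_smul, conjTranspose_sub, h2, fromBlocks_smul,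
      fromBlocks_sub_fromBlocks]
    congr 1 <;> module
  have hscale : ((2 : ℂ)⁻¹ • (V - W))ᴴ * ((2 : ℂ)⁻¹ • (V - W)) =
      ((0 : ℝ) : ℂ) • (1 : Matrix k k ℂ) + ((1 / 4 : ℝ) : ℂ) • ((V - W)ᴴ * (V - W)) := by
    rw [conjTranspose_smul, h2, smul_mul_smul_comm]
    push_cast
    module
  have hpsd := posSemidef_conjTranspose_mul_self (V - W)
  rw [hsub, fromBlocks_conjTranspose, fromBlocks_multiply]
  simp only [conjTranspose_zero, zero_mul, mul_zero, add_zero, zero_add,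
    conjTranspose_conjTranspose]
  rw [specSum_fromBlocks_diagonal, specSum_mul_comm _ ((2 : ℂ)⁻¹ • (V - W)), hscale,
    specSum_affine _ hpsd.isHermitian, specSum_eq_sum_eigenvalues _ hpsd.isHermitian, ← two_mul,
    mul_assoc]
  congr 1
  rw [Finset.mul_sum]
  refine Finset.sum_congr rfl fun i _ => ?_
  rw [zero_add, Real.mul_rpow (by norm_num) (hpsd.eigenvalues_nonneg i)]

theorem lpnorm_graphProj_sub_eq_iff [Nonempty k] {p : ℝ} (hp : 0 < p) (V W V' W' : Matrix k k ℂ) :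
    lpnorm p (graphProj V - graphProj W) = lpnorm p (graphProj V' - graphProj W') ↔
      lpnorm p (V - W) = lpnorm p (V' - W') := by
  rw [lpnorm_eq_lpnorm_iff hp, lpnorm_eq_lpnorm_iff hp, specSum_graphProj_sub,
    specSum_graphProj_sub]
  exact mul_right_inj' (by positivity)

theorem graphProj_injective : Function.Injective (graphProj (k := k)) := by
  intro V W h
  rw [graphProj, graphProj, fromBlocks_smul, fromBlocks_smul, fromBlocks_inj] at h
  exact smul_right_injective _ (inv_ne_zero two_ne_zero) h.2.1

/-- There is a projection halfway between `graphProj V` and `fromBlocks 1 0 0 0`. -/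
theorem exists_midpoint_projection {V : Matrix k k ℂ} (hV : V ∈ unitaryGroup k ℂ) {s : ℂ}
    (hs : s ^ 2 = 1 / 2) (hsr : star s = s) :
    ∃ T : Matrix (k ⊕ k) (k ⊕ k) ℂ, Tᴴ = T ∧ T * T = T ∧ T.trace = (Fintype.card k : ℂ) ∧
      (2 : ℂ) • T - 1 = s • ((2 : ℂ) • (graphProj V + fromBlocks 1 0 0 0 - 1)) := by
  have hEh : (fromBlocks 1 0 0 0 : Matrix (k ⊕ k) (k ⊕ k) ℂ)ᴴ = fromBlocks 1 0 0 0 := by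
    simp [fromBlocks_conjTranspose]
  have hE : (fromBlocks 1 0 0 0 : Matrix (k ⊕ k) (k ⊕ k) ℂ) * fromBlocks 1 0 0 0 =
      fromBlocks 1 0 0 0 := by simp [fromBlocks_multiply]
  have hEt : (fromBlocks 1 0 0 0 : Matrix (k ⊕ k) (k ⊕ k) ℂ).trace = (Fintype.card k : ℂ) := by
    simp [trace_fromBlocks_eq_add]
  have hsq := sq_add_sub_one (graphProj_mul_self hV) hE
  rw [graphProj_sub_sq hV] at hsq
  have hPh := graphProj_conjTranspose V
  have hPt := graphProj_trace V
  generalize graphProj V = P at *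
  generalize (fromBlocks 1 0 0 0 : Matrix (k ⊕ k) (k ⊕ k) ℂ) = E at *
  have hZh : (P + E - 1)ᴴ = P + E - 1 := by
    rw [conjTranspose_sub, conjTranspose_add, hPh, hEh, conjTranspose_one]
  have hZt : (P + E - 1).trace = 0 := by
    rw [trace_sub, trace_add, hPt, hEt, trace_one, Fintype.card_sum]
    push_cast
    ring
  generalize P + E - 1 = Z at *
  refine ⟨(2 : ℂ)⁻¹ • 1 + s • Z, ?_, ?_, ?_, ?_⟩
  · have h2 : star (2 : ℂ)⁻¹ = 2⁻¹ := by simp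
    rw [conjTranspose_add, conjTranspose_smul, conjTranspose_smul, conjTranspose_one, hZh, hsr, h2]
  · have hss : (s • Z) * (s • Z) = (4 : ℂ)⁻¹ • 1 := by
      rw [smul_mul_smul_comm, hsq, ← pow_two, hs]
      module
    rw [mul_add, add_mul, add_mul, hss]
    simp only [smul_mul_assoc, mul_smul_comm, one_mul, mul_one]
    module
  · rw [trace_add, trace_smul, trace_smul, hZt, trace_one, Fintype.card_sum]
    push_cast
    simp
    ring
  · module

end Blocks

/-- A surjective `L^p`-isometry `φ` of the trace-`1/2` projections of
`M_{2n}(ℂ) = M₂(Mₙ(ℂ))` fixing `fromBlocks I 0 0 0` induces a surjective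
`L^p`-isometry `ψ` of the unitary group of `Mₙ(ℂ)` via
`φ((1/2)·fromBlocks I V Vᴴ I) = (1/2)·fromBlocks I (ψV) (ψV)ᴴ I`. -/
theorem stmt15 (n : ℕ) (hn : 1 ≤ n) (p : ℝ) (hp : 0 < p)
    (φ : Matrix (Fin n ⊕ Fin n) (Fin n ⊕ Fin n) ℂ →
      Matrix (Fin n ⊕ Fin n) (Fin n ⊕ Fin n) ℂ)
    (hmem : ∀ P : Matrix (Fin n ⊕ Fin n) (Fin n ⊕ Fin n) ℂ,
      Pᴴ = P → P * P = P → P.trace = (n : ℂ) →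
      (φ P)ᴴ = φ P ∧ φ P * φ P = φ P ∧ (φ P).trace = (n : ℂ))
    (hsurj : ∀ Q : Matrix (Fin n ⊕ Fin n) (Fin n ⊕ Fin n) ℂ,
      Qᴴ = Q → Q * Q = Q → Q.trace = (n : ℂ) →
      ∃ P : Matrix (Fin n ⊕ Fin n) (Fin n ⊕ Fin n) ℂ,
        Pᴴ = P ∧ P * P = P ∧ P.trace = (n : ℂ) ∧ φ P = Q)
    (hiso : ∀ P Q : Matrix (Fin n ⊕ Fin n) (Fin n ⊕ Fin n) ℂ,
      Pᴴ = P → P * P = P → P.trace = (n : ℂ) →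
      Qᴴ = Q → Q * Q = Q → Q.trace = (n : ℂ) →
      lpnorm p (φ P - φ Q) = lpnorm p (P - Q))
    (hfix : φ (Matrix.fromBlocks 1 0 0 0) = Matrix.fromBlocks 1 0 0 0) :
    ∃ ψ : Matrix (Fin n) (Fin n) ℂ → Matrix (Fin n) (Fin n) ℂ,
      (∀ V ∈ Matrix.unitaryGroup (Fin n) ℂ, ψ V ∈ Matrix.unitaryGroup (Fin n) ℂ) ∧
      (∀ V' ∈ Matrix.unitaryGroup (Fin n) ℂ,
        ∃ V ∈ Matrix.unitaryGroup (Fin n) ℂ, ψ V = V') ∧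
      (∀ V ∈ Matrix.unitaryGroup (Fin n) ℂ, ∀ V' ∈ Matrix.unitaryGroup (Fin n) ℂ,
        lpnorm p (ψ V - ψ V') = lpnorm p (V - V')) ∧
      (∀ V ∈ Matrix.unitaryGroup (Fin n) ℂ,
        φ ((2 : ℂ)⁻¹ • Matrix.fromBlocks 1 V Vᴴ 1) =
          (2 : ℂ)⁻¹ • Matrix.fromBlocks 1 (ψ V) (ψ V)ᴴ 1) := by
  have : Nonempty (Fin n) := ⟨⟨0, hn⟩⟩
  have hEh : (fromBlocks 1 0 0 0 : Matrix (Fin n ⊕ Fin n) (Fin n ⊕ Fin n) ℂ)ᴴ =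
      fromBlocks 1 0 0 0 := by simp [fromBlocks_conjTranspose]
  have hE : (fromBlocks 1 0 0 0 : Matrix (Fin n ⊕ Fin n) (Fin n ⊕ Fin n) ℂ) *
      fromBlocks 1 0 0 0 = fromBlocks 1 0 0 0 := by simp [fromBlocks_multiply]
  have hEt : (fromBlocks 1 0 0 0 : Matrix (Fin n ⊕ Fin n) (Fin n ⊕ Fin n) ℂ).trace = (n : ℂ) := by
    simp [trace_fromBlocks_eq_add]
  have hGt : ∀ V : Matrix (Fin n) (Fin n) ℂ, (graphProj V).trace = (n : ℂ) := fun V => by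
    rw [graphProj_trace, Fintype.card_fin]
  have hGsq := fun (V : Matrix (Fin n) (Fin n) ℂ) (hV : V ∈ unitaryGroup (Fin n) ℂ) =>
    graphProj_sub_sq hV
  have hex := fun (P : Matrix (Fin n ⊕ Fin n) (Fin n ⊕ Fin n) ℂ) =>
    exists_eq_graphProj (P := P)
  have hmidpt := fun (V : Matrix (Fin n) (Fin n) ℂ) (hV : V ∈ unitaryGroup (Fin n) ℂ) (s : ℂ) =>
    exists_midpoint_projection hV (s := s)
  generalize (fromBlocks 1 0 0 0 : Matrix (Fin n ⊕ Fin n) (Fin n ⊕ Fin n) ℂ) = E at *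
  have hFh := conjTranspose_one_sub_of_eq hEh
  have hF : (1 - E) * (1 - E) = 1 - E := by
    simp only [mul_sub, sub_mul, hE, mul_one, one_mul]
    abel
  have hFt : (1 - E).trace = (n : ℂ) := by
    rw [trace_sub, hEt, trace_one, Fintype.card_sum, Fintype.card_fin]
    push_cast
    ring
  have hfixF : φ (1 - E) = 1 - E := by
    obtain ⟨h1, h2, -⟩ := hmem _ hFh hF hFt
    refine eq_one_sub_of_lpnorm_eq hp h1 h2 hEh hE ?_
    have h := hiso _ _ hFh hF hFt hEh hE hEt
    rwa [hfix] at h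
  have hs : ((√2 / 2 : ℝ) : ℂ) ^ 2 = 1 / 2 := by
    have h : (√2 / 2 : ℝ) ^ 2 = 1 / 2 := by
      rw [div_pow, Real.sq_sqrt zero_le_two]
      norm_num
    rw [← Complex.ofReal_pow, h]
    simp
  have hsr : star ((√2 / 2 : ℝ) : ℂ) = ((√2 / 2 : ℝ) : ℂ) := Complex.conj_ofReal _
  have himage : ∀ V ∈ unitaryGroup (Fin n) ℂ,
      ∃ W ∈ unitaryGroup (Fin n) ℂ, φ (graphProj V) = graphProj W := by
    intro V hV
    have hVh := graphProj_conjTranspose V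
    have hVp := graphProj_mul_self hV
    obtain ⟨h1, h2, h3⟩ := hmem _ hVh hVp (hGt V)
    refine hex _ h1 h2 ?_
    by_cases hp2 : p = 2
    · subst hp2
      obtain ⟨T, hTh, hT, hTt, hmid⟩ := hmidpt V hV _ hs hsr
      rw [Fintype.card_fin] at hTt
      obtain ⟨t1, t2, t3⟩ := hmem _ hTh hT hTt
      have hVE := hiso _ _ hVh hVp (hGt V) hEh hE hEt
      have hTE := hiso _ _ hTh hT hTt hEh hE hEt
      rw [hfix] at hVE hTE
      exact sq_sub_eq_half_of_lpnorm_two_eq hs hsr hVh hVp hEh hE hTh hT h1 h2 hEh hE t1 t2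
        (h3.trans (hGt V).symm) rfl (t3.trans hTt.symm) hVE
        (hiso _ _ hTh hT hTt hVh hVp (hGt V)) hTE hmid
    · have hVE := hiso _ _ hVh hVp (hGt V) hEh hE hEt
      have hVF := hiso _ _ hVh hVp (hGt V) hFh hF hFt
      rw [hfix] at hVE
      rw [hfixF] at hVF
      exact sq_sub_eq_half_of_lpnorm_eq hp hp2 hVh hVp h1 h2 hEh hE (hGsq V hV) hVE hVF
  have hpreimage : ∀ W ∈ unitaryGroup (Fin n) ℂ,
      ∃ V ∈ unitaryGroup (Fin n) ℂ, φ (graphProj V) = graphProj W := by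
    intro W hW
    have hWh := graphProj_conjTranspose W
    have hWp := graphProj_mul_self hW
    obtain ⟨P, h1, h2, h3, hPW⟩ := hsurj _ hWh hWp (hGt W)
    have hPE := hiso _ _ h1 h2 h3 hEh hE hEt
    rw [hfix, hPW] at hPE
    have hhalf : (P - E) * (P - E) = (2 : ℂ)⁻¹ • 1 := by
      by_cases hp2 : p = 2
      · subst hp2
        obtain ⟨T, hTh, hT, hTt, hmid⟩ := hmidpt W hW _ hs hsr
        rw [Fintype.card_fin] at hTt
        obtain ⟨S, t1, t2, t3, hST⟩ := hsurj _ hTh hT hTt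
        have hSE := hiso _ _ t1 t2 t3 hEh hE hEt
        have hSP := hiso _ _ t1 t2 t3 h1 h2 h3
        rw [hfix, hST] at hSE
        rw [hST, hPW] at hSP
        exact sq_sub_eq_half_of_lpnorm_two_eq hs hsr hWh hWp hEh hE hTh hT h1 h2 hEh hE t1 t2
          (h3.trans (hGt W).symm) rfl (t3.trans hTt.symm) hPE.symm hSP.symm hSE.symm hmid
      · have hPF := hiso _ _ h1 h2 h3 hFh hF hFt
        rw [hfixF, hPW] at hPF
        exact sq_sub_eq_half_of_lpnorm_eq hp hp2 hWh hWp h1 h2 hEh hE (hGsq W hW) hPE.symm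
          hPF.symm
    obtain ⟨V, hV, rfl⟩ := hex P h1 h2 hhalf
    exact ⟨V, hV, hPW⟩
  choose! ψ hψ hφψ using himage
  refine ⟨ψ, hψ, fun W hW => ?_, fun V hV V' hV' => ?_, hφψ⟩
  · obtain ⟨V, hV, h⟩ := hpreimage W hW
    exact ⟨V, hV, graphProj_injective ((hφψ V hV).symm.trans h)⟩
  · rw [← lpnorm_graphProj_sub_eq_iff hp, ← hφψ V hV, ← hφψ V' hV']
    exact hiso _ _ (graphProj_conjTranspose V) (graphProj_mul_self hV) (hGt V)
      (graphProj_conjTranspose V') (graphProj_mul_self hV') (hGt V')
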